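/- arXiv:1709.08190 — 3 statements merged into one kernel-verified Lean document; each statement's English description precedes it below -/
import Mathlib

section
/- Let p be a positive integer and q1 > q2 > q3 > q4 ≥ 1 be integers with gcd(p, q_i) = 1 for i = 1,2,3,4. If the four rational Beatty sequences S(p/q_i, β_i), i = 1,2,3,4, form a disjoint covering system of the integers, then p = 15 and (q1, q2, q3, q4) = (8, 4, 2, 1). -/
/-- The Beatty sequence `S(α, β) = {⌊α n + β⌋ : n ∈ ℤ}`. -/
def beattySet (α β : ℝ) : Set ℤ :=
  {m : ℤ | ∃ n : ℤ, m = ⌊α * n + β⌋}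

/-!
The sequence `S(p / q, β)` is a union of residue classes mod `p`: after multiplication by `-q` they
form an interval of `q` consecutive classes. Hence the Fourier coefficient of its indicator function
at `k` has absolute value `|sin (π k / p)| / |sin (π k q⁻¹ / p)|`, and in a disjoint covering system
these coefficients sum to zero over the sequences for every `k ≠ 0`. At `k = qᵢ` the `i`-th term has
denominator `sin (π / p)`; by the triangle inequality it cannot exceed the sum of the others, whose
denominators are `sin (π d / p)` for distinct `2 ≤ d ≤ p / 2`. For three other terms and `p ≥ 11`,
`1 / sin 3x + 1 / sin 4x + 1 / sin 5x < 1 / sin x` with `x = π / p` forces some `d = 2`, that is,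
`qᵢ = ±2 qⱼ` mod `p`. Multiplying over all `i` gives `2 ^ 4 = ±1` mod `p`, so `p` divides `15` or
`17`, and few quadruples with `∑ qᵢ = p` remain.
-/

section

open Finset ZMod
open scoped Real

/-! ### Floors -/

lemma exists_add_mul_mem_Ico_iff {p : ℤ} (hp : 0 < p) (a q : ℤ) :
    (∃ n, a + p * n ∈ Set.Ico 0 q) ↔ a % p < q := by
  constructor
  · rintro ⟨n, hn_nonneg, hn_lt⟩
    calc a % p = (a + p * n) % p := by simp
      _ ≤ a + p * n := by
        rw [Int.emod_def]
        exact sub_le_self _ (mul_nonneg hp.le (Int.ediv_nonneg hn_nonneg hp.le))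
      _ < q := hn_lt
  · intro h
    refine ⟨-(a / p), ?_⟩
    rw [mul_neg, ← sub_eq_add_neg, ← Int.emod_def]
    exact ⟨Int.emod_nonneg a hp.ne', h⟩

lemma mem_beattySet_iff_exists_mem_Ico (p : ℕ) {q : ℕ} (hq : 0 < q) (β : ℝ) (m : ℤ) :
    m ∈ beattySet (p / q) β ↔ ∃ n : ℤ, (⌊q * β⌋ - q * m) + p * n ∈ Set.Ico 0 (q : ℤ) := by
  have floor_eq (n : ℤ) : ⌊(p / q : ℝ) * n + β⌋ = (⌊q * β⌋ + p * n) / q := by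
    rw [← Int.floor_add_intCast, ← Int.floor_div_natCast]
    push_cast
    congr 1
    field_simp
    ring
  have hq' : (0 : ℤ) < q := by exact_mod_cast hq
  refine exists_congr fun n ↦ ?_
  rw [floor_eq, eq_comm, Int.ediv_eq_iff_of_pos hq', Set.mem_Ico]
  constructor <;> rintro ⟨h₁, h₂⟩ <;> constructor <;> linarith

/-! ### Sums over partitions and over sets of integers -/

lemma sum_sum_eq_sum_univ_of_existsUnique_mem {ι α M : Type*} [Fintype ι] [Fintype α]
    [AddCommMonoid M] {A : ι → Finset α} (hA : ∀ m, ∃! i, m ∈ A i) (f : α → M) :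
    ∑ i, ∑ m ∈ A i, f m = ∑ m, f m := by
  classical
  choose part mem_part part_unique using hA
  have hfiber (i : ι) : A i = ({m | part m = i} : Finset α) := by
    ext m
    simpa using ⟨fun h ↦ (part_unique m i h).symm, fun h ↦ h ▸ mem_part m⟩
  simp_rw [hfiber]
  exact sum_fiberwise univ part f

lemma sum_le_sum_range_of_antitoneOn {M : Type*} [AddCommMonoid M] [PartialOrder M]
    [IsOrderedAddMonoid M] {f : ℕ → M} {m n : ℕ} (hf : AntitoneOn f (Set.Icc m n))
    {S : Finset ℕ} (hS : S ⊆ Icc m n) :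
    ∑ d ∈ S, f d ≤ ∑ i ∈ range #S, f (m + i) := by
  induction S using Finset.induction_on_max with
  | empty => simp
  | insert a S hlt ih =>
    have ha_notMem : a ∉ S := fun ha ↦ (hlt a ha).false
    obtain ⟨ha, hSm⟩ := insert_subset_iff.mp hS
    rw [mem_Icc] at ha
    have hcard : m + #S ≤ a := by
      have hSa : S ⊆ Ico m a := fun x hx ↦ mem_Ico.mpr ⟨(mem_Icc.mp (hSm hx)).1, hlt x hx⟩
      have := card_le_card hSa
      rw [Nat.card_Ico] at this
      omega
    rw [sum_insert ha_notMem, card_insert_of_notMem ha_notMem, sum_range_succ, add_comm]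
    exact add_le_add (ih hSm) (hf ⟨by omega, by omega⟩ ha hcard)

/-! ### Reciprocals of sines -/

lemma antitoneOn_inv_sin_pi_mul_div (p : ℕ) :
    AntitoneOn (fun d : ℕ ↦ (Real.sin (π * d / p))⁻¹) (Set.Icc 1 (p / 2)) := by
  intro c hc d hd hcd
  have hp : (0 : ℝ) < p := by exact_mod_cast (show 0 < p by grind)
  have hd_half : π * d / p ≤ π / 2 := by
    have : (d * 2 : ℝ) ≤ p := by exact_mod_cast (Nat.le_div_iff_mul_le two_pos).mp hd.2
    rw [div_le_div_iff₀ hp two_pos, mul_assoc]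
    gcongr
  have hc_pos : 0 < π * c / p := by
    have : (0 : ℝ) < c := by exact_mod_cast hc.1
    positivity
  have hcd' : π * c / p ≤ π * d / p := by gcongr
  apply inv_anti₀ (Real.sin_pos_of_pos_of_lt_pi hc_pos (by linarith [Real.pi_pos]))
  exact Real.sin_le_sin_of_le_of_le_pi_div_two (by linarith) hd_half hcd'

lemma sin_four_mul (x : ℝ) :
    Real.sin (4 * x) = (8 * Real.cos x ^ 3 - 4 * Real.cos x) * Real.sin x := by
  rw [show 4 * x = 2 * (2 * x) by ring, Real.sin_two_mul, Real.sin_two_mul, Real.cos_two_mul]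
  ring

lemma sin_five_mul (x : ℝ) :
    Real.sin (5 * x) = (16 * Real.cos x ^ 4 - 12 * Real.cos x ^ 2 + 1) * Real.sin x := by
  rw [show 5 * x = 4 * x + x by ring, Real.sin_add, sin_four_mul,
    show 4 * x = 2 * (2 * x) by ring, Real.cos_two_mul, Real.cos_two_mul]
  ring

lemma inv_sin_three_four_five_mul_lt {x : ℝ} (hx₀ : 0 < x) (hx : x ≤ π / 11) :
    (Real.sin (3 * x))⁻¹ + (Real.sin (4 * x))⁻¹ + (Real.sin (5 * x))⁻¹ < (Real.sin x)⁻¹ := by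
  have hx' : x ≤ 0.286 := hx.trans (by linarith [Real.pi_lt_d4])
  have hsin : 0 < Real.sin x := Real.sin_pos_of_pos_of_lt_pi hx₀ (by linarith [Real.pi_gt_three])
  have hcos : 0.959 ≤ Real.cos x := by nlinarith [Real.one_sub_sq_div_two_le_cos (x := x)]
  have hcos_sq : 0.9196 ≤ Real.cos x ^ 2 := by nlinarith
  have sin_three_ge : 8 / 3 * Real.sin x ≤ Real.sin (3 * x) := by
    rw [Real.sin_three_mul]
    nlinarith [Real.sin_sq_add_cos_sq x]
  have sin_four_ge : 16 / 5 * Real.sin x ≤ Real.sin (4 * x) := by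
    rw [sin_four_mul]
    gcongr
    nlinarith
  have sin_five_ge : 17 / 5 * Real.sin x ≤ Real.sin (5 * x) := by
    rw [sin_five_mul]
    gcongr
    nlinarith
  calc (Real.sin (3 * x))⁻¹ + (Real.sin (4 * x))⁻¹ + (Real.sin (5 * x))⁻¹
      ≤ (8 / 3 * Real.sin x)⁻¹ + (16 / 5 * Real.sin x)⁻¹ + (17 / 5 * Real.sin x)⁻¹ := by gcongr
    _ = (3 / 8 + 5 / 16 + 5 / 17) * (Real.sin x)⁻¹ := by
        simp only [mul_inv]
        ring
    _ < (Real.sin x)⁻¹ := by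
        have := inv_pos.mpr hsin
        linarith

lemma sum_inv_sin_pi_mul_div_lt {p : ℕ} (hp : 11 ≤ p) {S : Finset ℕ} (hS : S ⊆ Icc 3 (p / 2))
    (hcard : #S = 3) : ∑ d ∈ S, (Real.sin (π * d / p))⁻¹ < (Real.sin (π / p))⁻¹ := by
  have hp' : (11 : ℝ) ≤ p := by exact_mod_cast hp
  have hanti := (antitoneOn_inv_sin_pi_mul_div p).mono
    (Set.Icc_subset_Icc_left (by norm_num : 1 ≤ 3))
  calc ∑ d ∈ S, (Real.sin (π * d / p))⁻¹
      ≤ ∑ i ∈ range #S, (Real.sin (π * (3 + i : ℕ) / p))⁻¹ :=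
        sum_le_sum_range_of_antitoneOn hanti hS
    _ = (Real.sin (3 * (π / p)))⁻¹ + (Real.sin (4 * (π / p)))⁻¹ + (Real.sin (5 * (π / p)))⁻¹ := by
        rw [hcard]
        simp only [sum_range_succ, sum_range_zero]
        push_cast
        ring_nf
    _ < (Real.sin (π / p))⁻¹ :=
        inv_sin_three_four_five_mul_lt (by positivity) (by gcongr)

/-! ### Units and additive characters modulo `p` -/

lemma pow_card_eq_one_or_neg_one {R ι : Type*} [CommRing R] [Fintype ι] {v : ι → Rˣ} {t : R}
    (hinj : ∀ i j, v i = v j ∨ v i = -v j → i = j)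
    (hmul : ∀ i, ∃ j, (v i : R) = t * v j ∨ (v i : R) = -(t * v j)) :
    t ^ Fintype.card ι = 1 ∨ t ^ Fintype.card ι = -1 := by
  have hsign (i : ι) : ∃ j, ∃ ε : ℤˣ, (v i : R) = (ε : ℤ) * (t * v j) := by
    obtain ⟨j, h | h⟩ := hmul i
    exacts [⟨j, 1, by simpa using h⟩, ⟨j, -1, by simpa using h⟩]
  choose σ ε hσ using hsign
  have hσ_inj : Function.Injective σ := by
    intro i j hij
    refine hinj i j ?_
    rw [Units.ext_iff, Units.ext_iff, Units.val_neg, hσ i, hσ j, hij]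
    rcases Int.units_eq_one_or (ε i) with hi | hi <;>
      rcases Int.units_eq_one_or (ε j) with hj | hj <;> simp [hi, hj]
  have hprod : ∏ i, (v (σ i) : R) = ∏ i, (v i : R) :=
    (Finite.injective_iff_bijective.mp hσ_inj).prod_comp fun i ↦ (v i : R)
  have hunit : IsUnit (∏ i, (v i : R)) := by
    rw [← Units.coe_prod]
    exact Units.isUnit _
  have hcycle : ((∏ i, ε i : ℤˣ) : ℤ) * t ^ Fintype.card ι = (1 : R) := by
    refine hunit.mul_right_cancel ?_
    rw [one_mul]
    conv_rhs => rw [prod_congr rfl fun i _ ↦ hσ i]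
    simp [prod_mul_distrib, hprod, mul_assoc]
  rcases Int.units_eq_one_or (∏ i, ε i) with h | h <;> rw [h] at hcycle
  · exact .inl (by simpa using hcycle)
  · exact .inr (by simpa [neg_eq_iff_eq_neg] using hcycle)

variable {p : ℕ}

/-- The absolute value of the representative of `v / w` of least absolute value, that is, the least
`d : ℕ` such that `v = d * w` or `v = -d * w` mod `p`. -/
def absRatio (v w : (ZMod p)ˣ) : ℕ := (v / w).val.valMinAbs.natAbs

lemma absRatio_self (hp : 1 < p) (v : (ZMod p)ˣ) : absRatio v v = 1 := by
  have h : (1 : ZMod p).valMinAbs = 1 := by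
    simpa using valMinAbs_natCast_of_le_half (n := p) (a := 1) (by omega)
  simp [absRatio, h]

lemma absRatio_eq_absRatio_iff (u v w : (ZMod p)ˣ) :
    absRatio u v = absRatio u w ↔ v = w ∨ v = -w := by
  rw [absRatio, absRatio, natAbs_valMinAbs_eq_natAbs_valMinAbs, ← Units.val_neg, Units.val_inj,
    Units.val_inj, ← div_neg_eq_neg_div, div_right_inj, div_right_inj]

variable [NeZero p]

lemma absRatio_le_half (v w : (ZMod p)ˣ) : absRatio v w ≤ p / 2 :=
  natAbs_valMinAbs_le _

lemma eq_absRatio_mul_or_eq_neg (v w : (ZMod p)ˣ) :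
    (v : ZMod p) = absRatio v w * w ∨ (v : ZMod p) = -(absRatio v w * w) := by
  rw [absRatio, natCast_natAbs_valMinAbs]
  split_ifs <;> simp [← Units.val_mul]

lemma three_le_absRatio (hp : 1 < p) {v w : (ZMod p)ˣ} (hone : ¬(v = w ∨ v = -w))
    (htwo : ¬((v : ZMod p) = 2 * w ∨ (v : ZMod p) = -(2 * w))) : 3 ≤ absRatio v w := by
  have : Fact (1 < p) := ⟨hp⟩
  have hvw := eq_absRatio_mul_or_eq_neg v w
  by_contra! hlt
  interval_cases absRatio v w
  · simp at hvw
  · exact hone (by simpa [Units.ext_iff] using hvw)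
  · exact htwo (by simpa using hvw)

lemma norm_stdAddChar_sub_one (r : ZMod p) :
    ‖stdAddChar r - 1‖ = 2 * Real.sin (π * r.valMinAbs.natAbs / p) := by
  have hp : (0 : ℝ) < p := by exact_mod_cast NeZero.pos p
  have habs : |π * r.valMinAbs / p| = π * r.valMinAbs.natAbs / p := by
    rw [abs_div, abs_mul, abs_of_pos Real.pi_pos, abs_of_pos hp, Nat.cast_natAbs, Int.cast_abs]
  have hle_pi : |π * r.valMinAbs / p| ≤ π := by
    have hle : (r.valMinAbs.natAbs : ℝ) ≤ p := by
      exact_mod_cast (natAbs_valMinAbs_le r).trans (Nat.div_le_self p 2)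
    rw [habs, div_le_iff₀ hp]
    gcongr
  have hchar : stdAddChar r = Complex.exp (Complex.I * (2 * (π * r.valMinAbs / p) : ℝ)) := by
    conv_lhs => rw [← coe_valMinAbs r, stdAddChar_coe]
    push_cast
    ring_nf
  rw [hchar, Complex.norm_exp_I_mul_ofReal_sub_one, mul_div_cancel_left₀ _ two_ne_zero, norm_mul,
    Real.norm_ofNat, Real.norm_eq_abs, Real.abs_sin_eq_sin_abs_of_abs_le_pi hle_pi, habs]

lemma norm_stdAddChar_sub_one_pos {r : ZMod p} (hr : r ≠ 0) : 0 < ‖stdAddChar r - 1‖ := by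
  rw [norm_pos_iff, sub_ne_zero, ← AddChar.map_zero_eq_one (stdAddChar (N := p))]
  exact injective_stdAddChar.ne hr

lemma norm_stdAddChar_mul_inv_sub_one (v w : (ZMod p)ˣ) :
    ‖stdAddChar (N := p) (v * ↑w⁻¹) - 1‖ = 2 * Real.sin (π * absRatio v w / p) := by
  rw [← Units.val_mul, ← div_eq_mul_inv, norm_stdAddChar_sub_one, absRatio]

/-! ### Beatty sequences modulo `p` -/

/-- The image of the Beatty sequence `S(p / q, β)` in `ℤ / p`, for `b` the class of `⌊q * β⌋`.
Since `S(p / q, β)` is the set of all `(p * n + ⌊q * β⌋) / q` with rounding down, it consists of the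
`m` for which `b - q * m` is congruent to one of `0, …, q - 1`. -/
def beattyResidues (p q : ℕ) [NeZero p] (b : ZMod p) : Finset (ZMod p) :=
  {m | (b - q * m).val < q}

variable {q : ℕ} {b : ZMod p} {v : (ZMod p)ˣ}

lemma mem_beattyResidues {m : ZMod p} : m ∈ beattyResidues p q b ↔ (b - q * m).val < q := by
  simp [beattyResidues]

lemma mem_beattySet_iff_mem_beattyResidues (hq : 0 < q) (β : ℝ) (m : ℤ) :
    m ∈ beattySet (p / q) β ↔ (m : ZMod p) ∈ beattyResidues p q ⌊q * β⌋ := by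
  rw [mem_beattySet_iff_exists_mem_Ico p hq,
    exists_add_mul_mem_Ico_iff (by exact_mod_cast NeZero.pos p), mem_beattyResidues,
    ← ZMod.val_intCast]
  norm_cast

lemma sum_beattyResidues {M : Type*} [AddCommMonoid M] (hv : (v : ZMod p) = q) (hqp : q ≤ p)
    (f : ZMod p → M) :
    ∑ m ∈ beattyResidues p q b, f m = ∑ j ∈ range q, f (v⁻¹ * (b - j)) := by
  have hval {j : ℕ} (hj : j < q) : (j : ZMod p).val = j := val_cast_of_lt (hj.trans_le hqp)
  refine sum_nbij' (fun m ↦ (b - q * m).val) (fun j ↦ v⁻¹ * (b - j)) ?_ ?_ ?_ ?_ ?_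
  · intro m hm
    simpa [mem_beattyResidues] using hm
  · intro j hj
    rw [mem_range] at hj
    simpa [mem_beattyResidues, ← hv, hval hj] using hj
  · intro m _
    simp [← hv]
  · intro j hj
    simp [← hv, hval (mem_range.mp hj)]
  · intro m _
    simp [← hv]

lemma card_beattyResidues (hv : (v : ZMod p) = q) (hqp : q ≤ p) :
    #(beattyResidues p q b) = q := by
  rw [card_eq_sum_ones, sum_beattyResidues hv hqp, ← card_eq_sum_ones, card_range]

lemma beattyResidues_nonempty (hv : (v : ZMod p) = q) (hq : 0 < q) :
    (beattyResidues p q b).Nonempty :=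
  ⟨v⁻¹ * b, by simpa [mem_beattyResidues, ← hv] using hq⟩

lemma beattyResidues_eq_univ (hpq : p ≤ q) : beattyResidues p q b = univ := by
  ext m
  simpa [mem_beattyResidues] using (val_lt _).trans_le hpq

lemma norm_sum_stdAddChar_beattyResidues (hv : (v : ZMod p) = q) (hqp : q ≤ p) (k : ZMod p) :
    ‖∑ m ∈ beattyResidues p q b, stdAddChar (-(m * k))‖ *
        ‖stdAddChar (N := p) (k * ↑v⁻¹) - 1‖ =
      ‖stdAddChar k - 1‖ := by
  have sum_eq : ∑ m ∈ beattyResidues p q b, stdAddChar (-(m * k)) =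
      stdAddChar (N := p) (-(↑v⁻¹ * b * k)) *
        ∑ j ∈ range q, stdAddChar (N := p) (k * ↑v⁻¹) ^ j := by
    rw [sum_beattyResidues hv hqp, mul_sum]
    refine sum_congr rfl fun j _ ↦ ?_
    rw [← AddChar.map_nsmul_eq_pow, ← AddChar.map_add_eq_mul, nsmul_eq_mul]
    ring_nf
  rw [sum_eq, norm_mul, AddChar.norm_apply, one_mul, ← norm_mul, geom_sum_mul,
    ← AddChar.map_nsmul_eq_pow, nsmul_eq_mul, ← hv, mul_left_comm, v.mul_inv, mul_one]

/-! ### Disjoint covering systems -/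

/-- A disjoint covering system of Beatty sequences `S(p / q i, β i)`, with `q i > 0` prime to `p`,
recorded modulo `p`: the residue sets partition `ℤ / p`. Here `b i` stands for `⌊q i * β i⌋`. -/
structure IsBeattyPartition {ι : Type*} (q : ι → ℕ) (b : ι → ZMod p) : Prop where
  pos : ∀ i, 0 < q i
  coprime : ∀ i, (q i).Coprime p
  existsUnique_mem : ∀ m, ∃! i, m ∈ beattyResidues p (q i) (b i)

lemma isBeattyPartition_of_existsUnique_mem_beattySet {ι : Type*} {q : ι → ℕ} {β : ι → ℝ}
    (hpos : ∀ i, 0 < q i) (hcop : ∀ i, (q i).Coprime p)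
    (hcov : ∀ m : ℤ, ∃! i, m ∈ beattySet (p / q i) (β i)) :
    IsBeattyPartition (p := p) q (fun i ↦ ⌊q i * β i⌋) where
  pos := hpos
  coprime := hcop
  existsUnique_mem m := by
    obtain ⟨m, rfl⟩ := intCast_surjective m
    simpa only [mem_beattySet_iff_mem_beattyResidues (hpos _)] using hcov m

namespace IsBeattyPartition

variable {ι : Type*} {q : ι → ℕ} {b : ι → ZMod p}

/-- The class of the denominator `q i` as a unit modulo `p`. -/
def unit (h : IsBeattyPartition q b) (i : ι) : (ZMod p)ˣ := unitOfCoprime (q i) (h.coprime i)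

lemma coe_unit (h : IsBeattyPartition q b) (i : ι) : (h.unit i : ZMod p) = q i :=
  coe_unitOfCoprime (q i) (h.coprime i)

lemma lt [Nontrivial ι] (h : IsBeattyPartition q b) (i : ι) : q i < p := by
  by_contra! hle
  obtain ⟨j, hji⟩ := exists_ne i
  obtain ⟨m, hm⟩ := beattyResidues_nonempty (b := b j) (h.coe_unit j) (h.pos j)
  exact hji ((h.existsUnique_mem m).unique hm (beattyResidues_eq_univ hle ▸ mem_univ m))

variable [Fintype ι]

lemma sum_eq [Nontrivial ι] (h : IsBeattyPartition q b) : ∑ i, q i = p := by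
  calc ∑ i, q i = ∑ i, #(beattyResidues p (q i) (b i)) :=
        sum_congr rfl fun i _ ↦ (card_beattyResidues (h.coe_unit i) (h.lt i).le).symm
    _ = ∑ _m : ZMod p, 1 := by
        simp_rw [card_eq_sum_ones]
        exact sum_sum_eq_sum_univ_of_existsUnique_mem h.existsUnique_mem _
    _ = p := by simp

lemma inv_norm_stdAddChar_sub_one_le_sum [Nontrivial ι] [DecidableEq ι]
    (h : IsBeattyPartition q b) {k : ZMod p} (hk : k ≠ 0) (i : ι) :
    ‖stdAddChar (N := p) (k * ↑(h.unit i)⁻¹) - 1‖⁻¹ ≤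
      ∑ j ∈ univ.erase i, ‖stdAddChar (N := p) (k * ↑(h.unit j)⁻¹) - 1‖⁻¹ := by
  let F (j : ι) : ℂ := ∑ m ∈ beattyResidues p (q j) (b j), stdAddChar (-(m * k))
  have norm_F (j : ι) :
      ‖F j‖ = ‖stdAddChar k - 1‖ * ‖stdAddChar (N := p) (k * ↑(h.unit j)⁻¹) - 1‖⁻¹ := by
    have hpos : 0 < ‖stdAddChar (N := p) (k * ↑(h.unit j)⁻¹) - 1‖ :=
      norm_stdAddChar_sub_one_pos (by simpa using hk)
    rw [eq_mul_inv_iff_mul_eq₀ hpos.ne',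
      norm_sum_stdAddChar_beattyResidues (h.coe_unit j) (h.lt j).le]
  have sum_F : ∑ j, F j = 0 := by
    simp_rw [F, sum_sum_eq_sum_univ_of_existsUnique_mem h.existsUnique_mem, ← mul_neg]
    rw [AddChar.sum_mulShift _ (isPrimitive_stdAddChar p), if_neg (neg_ne_zero.mpr hk),
      Nat.cast_zero]
  have norm_F_le : ‖F i‖ ≤ ∑ j ∈ univ.erase i, ‖F j‖ := by
    rw [← add_sum_erase univ F (mem_univ i)] at sum_F
    rw [eq_neg_of_add_eq_zero_left sum_F, norm_neg]
    exact norm_sum_le _ _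
  simp_rw [norm_F, ← mul_sum] at norm_F_le
  exact le_of_mul_le_mul_left norm_F_le (norm_stdAddChar_sub_one_pos hk)

lemma inv_sin_pi_div_le_sum [Nontrivial ι] [DecidableEq ι] (h : IsBeattyPartition q b) (i : ι) :
    (Real.sin (π / p))⁻¹ ≤
      ∑ j ∈ univ.erase i, (Real.sin (π * absRatio (h.unit i) (h.unit j) / p))⁻¹ := by
  have hp : 1 < p := lt_of_le_of_lt (h.pos i) (h.lt i)
  have : Fact (1 < p) := ⟨hp⟩
  have hle := h.inv_norm_stdAddChar_sub_one_le_sum (h.unit i).ne_zero i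
  simp_rw [norm_stdAddChar_mul_inv_sub_one, absRatio_self hp, mul_inv, ← mul_sum, Nat.cast_one,
    mul_one] at hle
  exact le_of_mul_le_mul_left hle (by norm_num)

lemma add_lt (h : IsBeattyPartition q b) (hι : 2 < Fintype.card ι) {i j : ι} (hij : i ≠ j) :
    q i + q j < p := by
  classical
  have : Nontrivial ι := ⟨i, j, hij⟩
  obtain ⟨l, hl⟩ : ∃ l, l ∉ ({i, j} : Finset ι) := by
    by_contra! hall
    have := card_le_two (a := i) (b := j)
    rw [eq_univ_of_forall hall, card_univ] at this
    omega
  rw [← h.sum_eq, ← sum_pair hij]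
  exact sum_lt_sum_of_subset (subset_univ _) (mem_univ l) hl (h.pos l) fun _ _ _ ↦ Nat.zero_le _

lemma eq_of_unit_eq_or_eq_neg (h : IsBeattyPartition q b) (hι : 2 < Fintype.card ι)
    (hq : Function.Injective q) {i j : ι} (hij : h.unit i = h.unit j ∨ h.unit i = -h.unit j) :
    i = j := by
  by_contra hne
  have : Nontrivial ι := ⟨i, j, hne⟩
  simp only [Units.ext_iff, Units.val_neg, coe_unit] at hij
  rcases hij with heq | hneg
  · rw [natCast_eq_natCast_iff', Nat.mod_eq_of_lt (h.lt i), Nat.mod_eq_of_lt (h.lt j)] at heq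
    exact hne (hq heq)
  · rw [eq_neg_iff_add_eq_zero, ← Nat.cast_add, natCast_eq_zero_iff] at hneg
    exact (h.add_lt hι hne).not_ge (Nat.le_of_dvd (by linarith [h.pos i]) hneg)

lemma exists_eq_two_mul_or_eq_neg_two_mul (h : IsBeattyPartition q b)
    (hι : Fintype.card ι = 4) (hq : Function.Injective q) (hp : 11 ≤ p) (i : ι) :
    ∃ j, (q i : ZMod p) = 2 * q j ∨ (q i : ZMod p) = -(2 * q j) := by
  classical
  by_contra hne_two
  have : Nontrivial ι := Fintype.one_lt_card_iff_nontrivial.mp (by omega)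
  have hunit {j l : ι} (hjl : h.unit j = h.unit l ∨ h.unit j = -h.unit l) : j = l :=
    h.eq_of_unit_eq_or_eq_neg (by omega) hq hjl
  let ratio (j : ι) : ℕ := absRatio (h.unit i) (h.unit j)
  have ratio_inj : Function.Injective ratio := fun j l hjl ↦
    hunit ((absRatio_eq_absRatio_iff _ _ _).mp hjl)
  have three_le_ratio {j : ι} (hj : j ≠ i) : 3 ≤ ratio j :=
    three_le_absRatio (by omega) (fun hij ↦ hj (hunit hij).symm)
      (by simpa only [coe_unit] using not_exists.mp hne_two j)
  have himage : (univ.erase i).image ratio ⊆ Icc 3 (p / 2) := by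
    simp only [image_subset_iff, mem_erase, mem_univ, and_true, mem_Icc]
    exact fun j hj ↦ ⟨three_le_ratio hj, absRatio_le_half _ _⟩
  have hcard : #((univ.erase i).image ratio) = 3 := by
    rw [card_image_of_injective _ ratio_inj, card_erase_of_mem (mem_univ i), card_univ, hι]
  have hlt := sum_inv_sin_pi_mul_div_lt hp himage hcard
  rw [sum_image ratio_inj.injOn] at hlt
  exact (h.inv_sin_pi_div_le_sum i).not_gt hlt

lemma two_pow_card_eq_one_or_neg_one (h : IsBeattyPartition q b) (hι : 2 < Fintype.card ι)
    (hq : Function.Injective q)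
    (htwo : ∀ i, ∃ j, (q i : ZMod p) = 2 * q j ∨ (q i : ZMod p) = -(2 * q j)) :
    (2 : ZMod p) ^ Fintype.card ι = 1 ∨ (2 : ZMod p) ^ Fintype.card ι = -1 :=
  pow_card_eq_one_or_neg_one (v := h.unit) (fun _ _ ↦ h.eq_of_unit_eq_or_eq_neg hι hq)
    (by simpa only [coe_unit] using htwo)

lemma eq_fifteen_or_eq_seventeen (h : IsBeattyPartition q b) (hι : Fintype.card ι = 4)
    (hq : Function.Injective q) (hp : 11 ≤ p) : p = 15 ∨ p = 17 := by
  have hpow := h.two_pow_card_eq_one_or_neg_one (by omega) hq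
    (h.exists_eq_two_mul_or_eq_neg_two_mul hι hq hp)
  rw [hι] at hpow
  have hdvd : p ∣ 15 ∨ p ∣ 17 := by
    simp only [← natCast_eq_zero_iff, Nat.cast_ofNat]
    exact hpow.imp (fun h ↦ by linear_combination h) (fun h ↦ by linear_combination h)
  rcases hdvd with hdvd | hdvd
  · have := Nat.le_of_dvd (by norm_num) hdvd
    interval_cases p <;> omega
  · have := Nat.le_of_dvd (by norm_num) hdvd
    interval_cases p <;> omega

end IsBeattyPartition

/-! ### The quadruples with `p = 15` and `p = 17` -/

lemma eq_of_sum_eq_fifteen {a b c d : ℕ} (hba : b < a) (hcb : c < b) (hdc : d < c) (hd : 1 ≤ d)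
    (hsum : a + b + c + d = 15) (hcop : ∀ i, (![a, b, c, d] i).Coprime 15) :
    a = 8 ∧ b = 4 ∧ c = 2 ∧ d = 1 := by
  obtain rfl : a = 15 - (b + c + d) := by omega
  have hd_le : d ≤ 2 := by omega
  have hc_le : c ≤ 3 := by omega
  have hb_le : b ≤ 5 := by omega
  interval_cases d <;> interval_cases c <;> interval_cases b <;>
    first | omega | exact absurd hcop (by decide)

lemma not_forall_exists_eq_two_mul_of_sum_eq_seventeen {a b c d : ℕ} (hba : b < a) (hcb : c < b)
    (hdc : d < c) (hd : 1 ≤ d) (hsum : a + b + c + d = 17) :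
    ¬∀ i, ∃ j, (![a, b, c, d] i : ZMod 17) = 2 * ![a, b, c, d] j ∨
      (![a, b, c, d] i : ZMod 17) = -(2 * ![a, b, c, d] j) := by
  obtain rfl : a = 17 - (b + c + d) := by omega
  have hd_le : d ≤ 2 := by omega
  have hc_le : c ≤ 4 := by omega
  have hb_le : b ≤ 6 := by omega
  interval_cases d <;> interval_cases c <;> interval_cases b <;> first | omega | decide

end

/-- Fraenkel's conjecture for `n = 4` with equal numerators (Theorem A):
if the four rational Beatty sequences `S(p/qᵢ, βᵢ)` form a disjoint covering
system of the integers (every integer lies in exactly one of them), with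
`q₁ > q₂ > q₃ > q₄ ≥ 1` and `gcd(p, qᵢ) = 1`, then `p = 15` and
`(q₁, q₂, q₃, q₄) = (8, 4, 2, 1)`. -/
theorem fraenkel_four (p q1 q2 q3 q4 : ℕ) (hp : 0 < p)
    (h12 : q2 < q1) (h23 : q3 < q2) (h34 : q4 < q3) (h4 : 1 ≤ q4)
    (hg1 : Nat.gcd p q1 = 1) (hg2 : Nat.gcd p q2 = 1)
    (hg3 : Nat.gcd p q3 = 1) (hg4 : Nat.gcd p q4 = 1)
    (β : Fin 4 → ℝ)
    (hcov : ∀ m : ℤ, ∃! i : Fin 4,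
      m ∈ beattySet ((p : ℝ) / ((![q1, q2, q3, q4] i : ℕ) : ℝ)) (β i)) :
    p = 15 ∧ q1 = 8 ∧ q2 = 4 ∧ q3 = 2 ∧ q4 = 1 := by
  have : NeZero p := ⟨hp.ne'⟩
  have hcop : ∀ i, (![q1, q2, q3, q4] i).Coprime p := by
    simp [Fin.forall_fin_succ, Nat.coprime_iff_gcd_eq_one, Nat.gcd_comm _ p, hg1, hg2, hg3, hg4]
  have hanti : StrictAnti ![q1, q2, q3, q4] := by
    simp [Fin.strictAnti_iff_succ_lt, Fin.forall_fin_succ, h12, h23, h34]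
  have hpos (i : Fin 4) : 0 < ![q1, q2, q3, q4] i :=
    h4.trans (hanti.antitone (Fin.le_last i))
  have h := isBeattyPartition_of_existsUnique_mem_beattySet hpos hcop hcov
  have hsum : q1 + q2 + q3 + q4 = p := by simpa [Fin.sum_univ_four] using h.sum_eq
  have hp_ne : p ≠ 10 := by
    rintro rfl
    obtain rfl : q3 = 2 := by omega
    norm_num at hg3
  have hp_ge : 11 ≤ p := by omega
  obtain rfl | rfl := h.eq_fifteen_or_eq_seventeen (Fintype.card_fin 4) hanti.injective hp_ge
  · exact ⟨rfl, eq_of_sum_eq_fifteen h12 h23 h34 h4 hsum hcop⟩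
  · exact absurd
      (h.exists_eq_two_mul_or_eq_neg_two_mul (Fintype.card_fin 4) hanti.injective hp_ge)
      (not_forall_exists_eq_two_mul_of_sum_eq_seventeen h12 h23 h34 h4 hsum)
end

section
/- Let p be a positive integer and q1 > q2 > q3 ≥ 1 be integers with gcd(p, q_i) = 1 for i = 1,2,3. If the three rational Beatty sequences S(p/q_i, β_i), i = 1,2,3, form a disjoint covering system of the integers, then p = 7 and (q1, q2, q3) = (4, 2, 1). -/
/-!
Modulo `p`, the sequence `S(p/q, β)` with `gcd(p, q) = 1` is an arithmetic progression of length `q`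
and difference `e = -q⁻¹`, so that `q e = -1`. In the group ring `ℤ[ℤ/p]` its geometric sum `F`
satisfies `(1 - [e]) F = [a] (1 - [-1])`, where `a` is the initial term. A disjoint cover means that
`∑ᵢ Fᵢ` is the sum `N` of all group elements, which every `1 - [g]` annihilates. Multiplying by
`∏ⱼ (1 - [eⱼ])` gives `Z (1 - [-1]) = 0` for `Z = ∑ᵢ [aᵢ] ∏_{j ≠ i} (1 - [eⱼ])`. Since `-1`
generates `ℤ/p`, all coefficients of `Z` agree, and `Z N = 0` shows that they vanish.

For three progressions `Z = 0` equates two multisets of six residues. The differences are distinct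
and no two of them, equal or not, sum to zero, so the initial terms form a cycle, each being one
step after the next, and up to reflection the only consistent cycle is `a₁ = a₂ + e₃`,
`a₂ = a₃ + e₁`, `a₃ = a₁ + e₂`. It forces `e₃ = 2 e₁`, `e₁ = 2 e₂`, `e₂ = 2 e₃`, whence `7 e₁ = 0`
and `p ∣ 7`.
-/

/-- Three initial terms and differences for which `∑ᵢ [aᵢ] ∏_{j ≠ i} (1 - [dⱼ]) = 0` in the group
ring, encoded by equating the multisets of positive and of negative terms of the expanded product,
and whose differences are pairwise distinct with no two, equal or not, summing to zero. -/
structure IsBalancedTriple {G : Type*} [AddCommGroup G] (a₁ a₂ a₃ d₁ d₂ d₃ : G) : Prop where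
  multiset_eq : ({a₁} + {a₂} + {a₃} + ({a₁ + d₂ + d₃} + {a₂ + d₃ + d₁} + {a₃ + d₁ + d₂}) :
      Multiset G) =
    {a₁ + d₂} + {a₂ + d₃} + {a₃ + d₁} + ({a₁ + d₃} + {a₂ + d₁} + {a₃ + d₂})
  ne : d₁ ≠ d₂ ∧ d₂ ≠ d₃ ∧ d₃ ≠ d₁
  add_ne_zero : d₁ + d₂ ≠ 0 ∧ d₂ + d₃ ≠ 0 ∧ d₃ + d₁ ≠ 0
  add_self_ne_zero : d₁ + d₁ ≠ 0 ∧ d₂ + d₂ ≠ 0 ∧ d₃ + d₃ ≠ 0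

namespace IsBalancedTriple

variable {G : Type*} [AddCommGroup G] {a₁ a₂ a₃ d₁ d₂ d₃ : G}

theorem rotate (h : IsBalancedTriple a₁ a₂ a₃ d₁ d₂ d₃) :
    IsBalancedTriple a₂ a₃ a₁ d₂ d₃ d₁ where
  multiset_eq := by convert h.multiset_eq using 1 <;> abel
  ne := by grind [h.ne]
  add_ne_zero := by grind [h.add_ne_zero]
  add_self_ne_zero := by grind [h.add_self_ne_zero]

theorem swap (h : IsBalancedTriple a₁ a₂ a₃ d₁ d₂ d₃) :
    IsBalancedTriple a₁ a₃ a₂ d₁ d₃ d₂ where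
  multiset_eq := by
    rw [add_right_comm a₁, add_right_comm a₂, add_right_comm a₃]
    convert h.multiset_eq using 1 <;> abel
  ne := by grind [h.ne]
  add_ne_zero := by grind [h.add_ne_zero]
  add_self_ne_zero := by grind [h.add_self_ne_zero]

theorem start_eq (h : IsBalancedTriple a₁ a₂ a₃ d₁ d₂ d₃) :
    (a₁ = a₂ + d₁ ∨ a₁ = a₂ + d₃) ∨ (a₁ = a₃ + d₁ ∨ a₁ = a₃ + d₂) := by
  have mem : a₁ ∈ ({a₁ + d₂} + {a₂ + d₃} + {a₃ + d₁} + ({a₁ + d₃} + {a₂ + d₁} + {a₃ + d₂}) :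
      Multiset G) := by
    rw [← h.multiset_eq]
    simp
  simp only [Multiset.mem_add, Multiset.mem_singleton] at mem
  grind [h.add_self_ne_zero]

theorem not_mutual (h : IsBalancedTriple a₁ a₂ a₃ d₁ d₂ d₃) (h₁₂ : a₁ = a₂ + d₁ ∨ a₁ = a₂ + d₃) :
    ¬(a₂ = a₁ + d₂ ∨ a₂ = a₁ + d₃) := by
  grind [h.add_ne_zero, h.add_self_ne_zero]

theorem eq_or_eq_or_eq_of_multiset_eq (h : IsBalancedTriple a₁ a₂ a₃ d₁ d₂ d₃) {x y z : G}
    (hxyz : ({a₁ + d₂} + {a₂ + d₃} + {a₃ + d₁} + ({a₁ + d₃} + {a₂ + d₁} + {a₃ + d₂}) : Multiset G) =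
      {a₁} + {a₂} + {a₃} + ({x} + {y} + {z})) :
    a₁ + d₂ + d₃ = x ∨ a₁ + d₂ + d₃ = y ∨ a₁ + d₂ + d₃ = z := by
  have cancelled := add_left_cancel (h.multiset_eq.trans hxyz)
  have mem : a₁ + d₂ + d₃ ∈ ({x} + {y} + {z} : Multiset G) := by
    rw [← cancelled]
    simp
  simpa [or_assoc] using mem

-- The index words record the differences by which `a₁`, `a₂`, `a₃` follow `a₂`, `a₃`, `a₁`. In each
-- case the three known coincidences cancel from `multiset_eq`, leaving two multisets of size three.
theorem not_steps_one_one_two (h : IsBalancedTriple a₁ a₂ a₃ d₁ d₂ d₃)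
    (h₁ : a₁ = a₂ + d₁) (h₂ : a₂ = a₃ + d₁) (h₃ : a₃ = a₁ + d₂) : False := by
  have mem := h.eq_or_eq_or_eq_of_multiset_eq (x := a₁ + d₃) (y := a₂ + d₃) (z := a₃ + d₂) (by
    rw [← h₁, ← h₂, ← h₃]
    abel)
  grind [h.ne, h.add_self_ne_zero]

theorem not_steps_one_one_three (h : IsBalancedTriple a₁ a₂ a₃ d₁ d₂ d₃)
    (h₁ : a₁ = a₂ + d₁) (h₂ : a₂ = a₃ + d₁) (h₃ : a₃ = a₁ + d₃) : False := by
  have mem := h.rotate.eq_or_eq_or_eq_of_multiset_eq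
    (x := a₁ + d₂) (y := a₂ + d₃) (z := a₃ + d₂) (by
    rw [← h₁, ← h₂, ← h₃]
    abel)
  grind [h.ne, h.add_self_ne_zero]

theorem not_steps_one_two_three (h : IsBalancedTriple a₁ a₂ a₃ d₁ d₂ d₃)
    (h₁ : a₁ = a₂ + d₁) (h₂ : a₂ = a₃ + d₂) (h₃ : a₃ = a₁ + d₃) : False := by
  have mem := h.eq_or_eq_or_eq_of_multiset_eq (x := a₁ + d₂) (y := a₂ + d₃) (z := a₃ + d₁) (by
    rw [← h₁, ← h₂, ← h₃]
    abel)
  grind [h.ne, h.add_ne_zero, h.add_self_ne_zero]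

theorem eq_add_self_of_steps_three_one_two (h : IsBalancedTriple a₁ a₂ a₃ d₁ d₂ d₃)
    (h₁ : a₁ = a₂ + d₃) (h₂ : a₂ = a₃ + d₁) (h₃ : a₃ = a₁ + d₂) : d₃ = d₁ + d₁ := by
  have mem := h.eq_or_eq_or_eq_of_multiset_eq (x := a₁ + d₃) (y := a₂ + d₁) (z := a₃ + d₂) (by
    rw [← h₁, ← h₂, ← h₃]
    abel)
  grind [h.ne, h.add_ne_zero]

theorem seven_nsmul_eq_zero_of_start_eq (h : IsBalancedTriple a₁ a₂ a₃ d₁ d₂ d₃)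
    (h₁₂ : a₁ = a₂ + d₁ ∨ a₁ = a₂ + d₃) : 7 • d₁ = 0 := by
  have h₂₃ := h.rotate.start_eq.resolve_right (h.not_mutual h₁₂)
  have h₃₁ := h.rotate.rotate.start_eq.resolve_right (h.rotate.not_mutual h₂₃)
  rcases h₁₂ with h₁ | h₁ <;> rcases h₂₃ with h₂ | h₂ <;> rcases h₃₁ with h₃ | h₃
  · exact (h.not_steps_one_two_three h₁ h₂ h₃).elim
  · exact (h.rotate.not_steps_one_one_three h₂ h₃ h₁).elim
  · exact (h.not_steps_one_one_three h₁ h₂ h₃).elim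
  · exact (h.not_steps_one_one_two h₁ h₂ h₃).elim
  · exact (h.rotate.rotate.not_steps_one_one_three h₃ h₁ h₂).elim
  · exact (h.rotate.not_steps_one_one_two h₂ h₃ h₁).elim
  · exact (h.rotate.rotate.not_steps_one_one_two h₃ h₁ h₂).elim
  · have eq₃ := h.eq_add_self_of_steps_three_one_two h₁ h₂ h₃
    have eq₁ := h.rotate.eq_add_self_of_steps_three_one_two h₂ h₃ h₁
    have eq₂ := h.rotate.rotate.eq_add_self_of_steps_three_one_two h₃ h₁ h₂
    have eight_nsmul : 8 • d₁ = d₁ := by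
      conv_rhs => rw [eq₁, eq₂, eq₃]
      abel
    rwa [succ_nsmul, add_eq_right] at eight_nsmul

theorem seven_nsmul_eq_zero (h : IsBalancedTriple a₁ a₂ a₃ d₁ d₂ d₃) : 7 • d₁ = 0 := by
  rcases h.start_eq with h₁₂ | h₁₃
  · exact h.seven_nsmul_eq_zero_of_start_eq h₁₂
  · exact h.swap.seven_nsmul_eq_zero_of_start_eq h₁₃

end IsBalancedTriple

open AddMonoidAlgebra Finset

section GroupRing

theorem coeff_multiset_sum_single {α : Type*} [DecidableEq α] (s : Multiset α) (x : α) :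
    (s.map fun y => single y (1 : ℤ)).sum.coeff x = s.count x := by
  induction s using Multiset.induction with
  | empty => simp
  | cons y s ih =>
    rw [Multiset.map_cons, Multiset.sum_cons, coeff_add, Finsupp.add_apply, ih, coeff_single,
      Finsupp.single_apply, Multiset.count_cons]
    grind

theorem multiset_sum_single_injective {α : Type*} :
    Function.Injective fun s : Multiset α => (s.map fun x => single x (1 : ℤ)).sum := by
  classical
  intro s t hst
  ext x
  have coeff_eq := congr_arg (fun z => z.coeff x) hst
  simpa only [coeff_multiset_sum_single, Nat.cast_inj] using coeff_eq

variable {G : Type*} [AddCommGroup G] [Fintype G]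

theorem one_sub_single_mul_sum_single (g : G) :
    (1 - single g (1 : ℤ)) * ∑ x : G, single x 1 = 0 := by
  have translate : single g 1 * ∑ x : G, single x (1 : ℤ) = ∑ x : G, single x 1 := by
    simp only [mul_sum, single_mul_single, mul_one]
    exact Equiv.sum_comp (Equiv.addLeft g) fun x => single x (1 : ℤ)
  rw [sub_mul, one_mul, translate, sub_self]

theorem eq_zero_of_mul_one_sub_single_eq_zero {z : AddMonoidAlgebra ℤ G} {u : G}
    (hu : ∀ g, g ∈ AddSubmonoid.multiples u) (hzu : z * (1 - single u 1) = 0)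
    (hsum : z * ∑ g : G, single g 1 = 0) : z = 0 := by
  have mul_single (g : G) : z * single g 1 = z := by
    obtain ⟨n, rfl⟩ := AddSubmonoid.mem_multiples_iff _ _ |>.mp (hu g)
    have : z * (1 - single u 1 ^ n) = 0 := by
      rw [← mul_neg_geom_sum, ← mul_assoc, hzu, zero_mul]
    rw [mul_sub, mul_one, sub_eq_zero, single_pow, one_pow] at this
    exact this.symm
  have card_smul : Fintype.card G • z.coeff = 0 := by
    rw [← coeff_smul, coeff_eq_zero]
    simpa [mul_sum, mul_single] using hsum
  simpa using card_smul

end GroupRing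

/-- The progressions `a i, a i + e i, …, a i + (q i - 1) • e i` partition `G`. Bijectivity on pairs
(progression, index) also makes the terms of each single progression distinct. -/
def IsProgressionPartition {ι G : Type*} [AddCommGroup G] (a e : ι → G) (q : ι → ℕ) : Prop :=
  Function.Bijective fun x : Σ i, Fin (q i) => a x.1 + (x.2 : ℕ) • e x.1

namespace IsProgressionPartition

variable {ι G : Type*} [Fintype ι] [AddCommGroup G] {a e : ι → G} {q : ι → ℕ}

theorem sum_length_eq_card (h : IsProgressionPartition a e q) : ∑ i, q i = Nat.card G := by
  simpa using Nat.card_eq_of_bijective _ h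

theorem sum_geom_sum_eq [Fintype G] (h : IsProgressionPartition a e q) :
    ∑ i, single (a i) (1 : ℤ) * ∑ j ∈ range (q i), single (e i) 1 ^ j = ∑ x : G, single x 1 := by
  rw [← h.sum_comp fun x => single x (1 : ℤ), Fintype.sum_sigma]
  simp [Finset.sum_range, mul_sum, single_pow, single_mul_single]

theorem sum_single_mul_prod_eq_zero [DecidableEq ι] [Nontrivial ι]
    (h : IsProgressionPartition a e q) {u : G} (hu : ∀ g, g ∈ AddSubmonoid.multiples u)
    (hqe : ∀ i, q i • e i = u) :
    ∑ i, single (a i) (1 : ℤ) * ∏ j ∈ univ.erase i, (1 - single (e j) 1) = 0 := by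
  have : Finite G := Finite.of_surjective _ h.surjective
  have : Fintype G := Fintype.ofFinite G
  refine eq_zero_of_mul_one_sub_single_eq_zero hu ?_ ?_
  · have telescope (i : ι) :
        single (a i) (1 : ℤ) * (∏ j ∈ univ.erase i, (1 - single (e j) 1)) * (1 - single u 1) =
          (∏ j, (1 - single (e j) 1)) *
            (single (a i) 1 * ∑ j ∈ range (q i), single (e i) 1 ^ j) := by
      have geom := mul_neg_geom_sum (single (e i) (1 : ℤ)) (q i)
      rw [single_pow, one_pow, hqe] at geom
      rw [← geom, ← mul_prod_erase univ _ (mem_univ i)]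
      ring
    obtain ⟨i⟩ : Nonempty ι := inferInstance
    rw [sum_mul, sum_congr rfl fun i _ => telescope i, ← mul_sum, h.sum_geom_sum_eq,
      ← prod_erase_mul univ _ (mem_univ i), mul_assoc, one_sub_single_mul_sum_single, mul_zero]
  · rw [sum_mul]
    refine sum_eq_zero fun i _ => ?_
    obtain ⟨j, hji⟩ := exists_ne i
    rw [← prod_erase_mul _ _ (mem_erase.mpr ⟨hji, mem_univ j⟩), mul_assoc, mul_assoc,
      one_sub_single_mul_sum_single, mul_zero, mul_zero]

theorem multiset_eq_of_fin_three {a e : Fin 3 → G} {q : Fin 3 → ℕ}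
    (h : IsProgressionPartition a e q) {u : G} (hu : ∀ g, g ∈ AddSubmonoid.multiples u)
    (hqe : ∀ i, q i • e i = u) :
    ({a 0} + {a 1} + {a 2} +
      ({a 0 + e 1 + e 2} + {a 1 + e 2 + e 0} + {a 2 + e 0 + e 1}) : Multiset G) =
      {a 0 + e 1} + {a 1 + e 2} + {a 2 + e 0} + ({a 0 + e 2} + {a 1 + e 0} + {a 2 + e 1}) := by
  apply multiset_sum_single_injective
  have single_add (x y : G) : single (x + y) (1 : ℤ) = single x 1 * single y 1 := by
    rw [single_mul_single, mul_one]
  have h0 : univ.erase (0 : Fin 3) = {1, 2} := by decide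
  have h1 : univ.erase (1 : Fin 3) = {2, 0} := by decide
  have h2 : univ.erase (2 : Fin 3) = {0, 1} := by decide
  have identity := h.sum_single_mul_prod_eq_zero hu hqe
  rw [Fin.sum_univ_three, h0, h1, h2, prod_pair (by decide), prod_pair (by decide),
    prod_pair (by decide)] at identity
  simp only [Multiset.map_add, Multiset.map_singleton, Multiset.sum_add, Multiset.sum_singleton,
    single_add]
  linear_combination identity

end IsProgressionPartition

section Beatty

theorem mem_beattySet_iff {p q : ℕ} (hq : 0 < q) (β : ℝ) (m : ℤ) :
    m ∈ beattySet (p / q) β ↔ ∃ n : ℤ, ∃ j < q, q * m + ⌈-(q * β)⌉ + j = p * n := by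
  have hq' : (0 : ℝ) < q := by exact_mod_cast hq
  refine exists_congr fun n => ?_
  have floor_arg : (p : ℝ) / q * n + β = (p * n + q * β) / q := by field_simp
  have lower : (m : ℝ) * q ≤ p * n + q * β ↔ ⌈-(q * β)⌉ ≤ p * n - q * m := by
    rw [Int.ceil_le]
    push_cast
    constructor <;> intro h <;> linarith
  have upper : p * n + q * β < ((m : ℝ) + 1) * q ↔ p * n - q * m - q < ⌈-(q * β)⌉ := by
    rw [Int.lt_ceil]
    push_cast
    constructor <;> intro h <;> linarith
  rw [eq_comm, Int.floor_eq_iff, floor_arg, le_div_iff₀ hq', div_lt_iff₀ hq', lower, upper]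
  constructor
  · rintro ⟨hl, hu⟩
    exact ⟨(p * n - q * m - ⌈-(q * β)⌉).toNat, by omega, by omega⟩
  · rintro ⟨j, hj, hn⟩
    omega

theorem exists_mem_beattySet_iff_intCast_eq {p q : ℕ} (hq : 0 < q) (hpq : p.Coprime q) (β : ℝ) :
    ∃ a : ZMod p, ∀ m : ℤ,
      m ∈ beattySet (p / q) β ↔ ∃ j < q, a + j • (-(q : ZMod p)⁻¹) = m := by
  have inv := ZMod.coe_mul_inv_eq_one q hpq.symm
  refine ⟨-(q : ZMod p)⁻¹ * ⌈-(q * β)⌉, fun m => ?_⟩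
  rw [mem_beattySet_iff hq, exists_comm]
  refine exists_congr fun j => ?_
  rw [exists_and_left, and_congr_right_iff]
  intro _
  rw [← dvd_def, ← ZMod.intCast_zmod_eq_zero_iff_dvd]
  push_cast
  rw [nsmul_eq_mul]
  constructor <;> intro h
  · linear_combination -(q : ZMod p)⁻¹ * h + m * inv
  · linear_combination -q * h - (⌈-(q * β)⌉ + j) * inv

theorem le_of_disjoint_beattySet {p : ℕ} [NeZero p] {q q' : ℕ} (hq : 0 < q) (hpq : p.Coprime q)
    {β β' : ℝ} (h : Disjoint (beattySet (p / q) β) (beattySet (p / q') β')) : q ≤ p := by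
  by_contra! hlt
  obtain ⟨a, ha⟩ := exists_mem_beattySet_iff_intCast_eq hq hpq β
  have inv := ZMod.coe_mul_inv_eq_one q hpq.symm
  have mem (m : ℤ) : m ∈ beattySet (p / q) β := by
    refine (ha m).mpr ⟨(q * (a - m)).val, (ZMod.val_lt _).trans hlt, ?_⟩
    rw [nsmul_eq_mul, ZMod.natCast_zmod_val]
    linear_combination (m - a) * inv
  exact Set.disjoint_left.mp h (mem _) ⟨0, rfl⟩

theorem exists_isProgressionPartition {ι : Type*} [Nontrivial ι] {p : ℕ} [NeZero p]
    {q : ι → ℕ} (hq : ∀ i, 0 < q i) (hpq : ∀ i, p.Coprime (q i)) {β : ι → ℝ}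
    (hcov : ∀ m : ℤ, ∃! i, m ∈ beattySet (p / q i) (β i)) :
    ∃ a : ι → ZMod p, IsProgressionPartition a (fun i => -(q i : ZMod p)⁻¹) q := by
  have length_le (i : ι) : q i ≤ p := by
    obtain ⟨j, hji⟩ := exists_ne i
    exact le_of_disjoint_beattySet (hq i) (hpq i) (Set.disjoint_left.mpr fun m hi hj =>
      hji ((hcov m).unique hj hi))
  choose a ha using fun i => exists_mem_beattySet_iff_intCast_eq (hq i) (hpq i) (β i)
  refine ⟨a, ?_, fun x => ?_⟩
  · rintro ⟨i, j, hj⟩ ⟨i', j', hj'⟩ heq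
    obtain ⟨m, hm⟩ := ZMod.intCast_surjective (a i + j • (-(q i : ZMod p)⁻¹))
    obtain rfl : i = i' := (hcov m).unique ((ha i m).mpr ⟨j, hj, hm.symm⟩)
      ((ha i' m).mpr ⟨j', hj', heq.symm.trans hm.symm⟩)
    have inv := ZMod.coe_mul_inv_eq_one (q i) (hpq i).symm
    have cast_eq : (j : ZMod p) = j' := by
      simp only [nsmul_eq_mul] at heq
      linear_combination -q i * heq - (j - j') * inv
    rw [ZMod.natCast_eq_natCast_iff'] at cast_eq
    obtain rfl : j = j' := by
      rwa [Nat.mod_eq_of_lt (hj.trans_le (length_le i)),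
        Nat.mod_eq_of_lt (hj'.trans_le (length_le i))] at cast_eq
    rfl
  · obtain ⟨m, rfl⟩ := ZMod.intCast_surjective x
    obtain ⟨i, hi, -⟩ := hcov m
    obtain ⟨j, hj, hm⟩ := (ha i m).mp hi
    exact ⟨⟨i, j, hj⟩, hm⟩

end Beatty

section Residues

variable {p q q' : ℕ}

theorem eq_of_neg_inv_eq (hq : p.Coprime q) (hq' : p.Coprime q') (hlt : q < p) (hlt' : q' < p)
    (h : -(q : ZMod p)⁻¹ = -(q' : ZMod p)⁻¹) : q = q' := by
  have inv := ZMod.coe_mul_inv_eq_one q hq.symm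
  have inv' := ZMod.coe_mul_inv_eq_one q' hq'.symm
  have cast_eq : (q : ZMod p) = q' := by linear_combination -q * inv' + q' * inv + q * q' * h
  rwa [ZMod.natCast_eq_natCast_iff', Nat.mod_eq_of_lt hlt, Nat.mod_eq_of_lt hlt'] at cast_eq

theorem dvd_add_of_neg_inv_add_neg_inv_eq_zero (hq : p.Coprime q) (hq' : p.Coprime q')
    (h : -(q : ZMod p)⁻¹ + -(q' : ZMod p)⁻¹ = 0) : p ∣ q + q' := by
  have inv := ZMod.coe_mul_inv_eq_one q hq.symm
  have inv' := ZMod.coe_mul_inv_eq_one q' hq'.symm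
  rw [← ZMod.natCast_eq_zero_iff]
  push_cast
  linear_combination -q * inv' - q' * inv - q * q' * h

theorem dvd_of_nsmul_neg_inv_eq_zero {n : ℕ} (hq : p.Coprime q)
    (h : n • (-(q : ZMod p)⁻¹) = 0) : p ∣ n := by
  have inv := ZMod.coe_mul_inv_eq_one q hq.symm
  rw [← ZMod.natCast_eq_zero_iff]
  rw [nsmul_eq_mul] at h
  linear_combination -q * h - n * inv

theorem mem_multiples_neg_one [NeZero p] (g : ZMod p) :
    g ∈ AddSubmonoid.multiples (-1 : ZMod p) := by
  refine (AddSubmonoid.mem_multiples_iff _ _).mpr ⟨(-g).val, ?_⟩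
  rw [nsmul_eq_mul, ZMod.natCast_zmod_val, neg_mul_neg, mul_one]

end Residues

theorem isBalancedTriple_of_isProgressionPartition {p : ℕ} {q : Fin 3 → ℕ} {a : Fin 3 → ZMod p}
    (hq : ∀ i, 0 < q i) (hpq : ∀ i, p.Coprime (q i)) (hinj : Function.Injective q)
    (h : IsProgressionPartition a (fun i => -(q i : ZMod p)⁻¹) q) :
    IsBalancedTriple (a 0) (a 1) (a 2)
      (-(q 0 : ZMod p)⁻¹) (-(q 1 : ZMod p)⁻¹) (-(q 2 : ZMod p)⁻¹) := by
  have sum_eq : q 0 + q 1 + q 2 = p := by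
    simpa [Fin.sum_univ_three] using h.sum_length_eq_card
  have pos₀ := hq 0
  have pos₁ := hq 1
  have pos₂ := hq 2
  have : NeZero p := ⟨by omega⟩
  have lt : ∀ i, q i < p
    | 0 | 1 | 2 => by omega
  have nsmul_eq (i : Fin 3) : q i • (-(q i : ZMod p)⁻¹) = -1 := by
    rw [nsmul_eq_mul, mul_neg, ZMod.coe_mul_inv_eq_one (q i) (hpq i).symm]
  have ne {i j : Fin 3} (hij : i ≠ j) : -(q i : ZMod p)⁻¹ ≠ -(q j : ZMod p)⁻¹ := fun heq =>
    hij (hinj (eq_of_neg_inv_eq (hpq i) (hpq j) (lt i) (lt j) heq))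
  have add_ne {i j : Fin 3} (hij : q i + q j < p) :
      -(q i : ZMod p)⁻¹ + -(q j : ZMod p)⁻¹ ≠ 0 := fun heq =>
    hij.not_ge (Nat.le_of_dvd (Nat.add_pos_left (hq i) _)
      (dvd_add_of_neg_inv_add_neg_inv_eq_zero (hpq i) (hpq j) heq))
  have add_self_ne (i : Fin 3) : -(q i : ZMod p)⁻¹ + -(q i : ZMod p)⁻¹ ≠ 0 := fun heq => by
    have := Nat.le_of_dvd two_pos
      (dvd_of_nsmul_neg_inv_eq_zero (hpq i) ((two_nsmul _).trans heq))
    omega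
  exact {
    multiset_eq := h.multiset_eq_of_fin_three mem_multiples_neg_one nsmul_eq
    ne := ⟨ne (by decide), ne (by decide), ne (by decide)⟩
    add_ne_zero := ⟨add_ne (by omega), add_ne (by omega), add_ne (by omega)⟩
    add_self_ne_zero := ⟨add_self_ne 0, add_self_ne 1, add_self_ne 2⟩ }

/-- Fraenkel's conjecture for `n = 3` with equal numerators:
if the three rational Beatty sequences `S(p/qᵢ, βᵢ)` form a disjoint covering
system of the integers, with `q₁ > q₂ > q₃ ≥ 1` and `gcd(p, qᵢ) = 1`, then
`p = 7` and `(q₁, q₂, q₃) = (4, 2, 1)`. -/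
theorem fraenkel_three (p q1 q2 q3 : ℕ) (hp : 0 < p)
    (h12 : q2 < q1) (h23 : q3 < q2) (h3 : 1 ≤ q3)
    (hg1 : Nat.gcd p q1 = 1) (hg2 : Nat.gcd p q2 = 1) (hg3 : Nat.gcd p q3 = 1)
    (β : Fin 3 → ℝ)
    (hcov : ∀ m : ℤ, ∃! i : Fin 3,
      m ∈ beattySet ((p : ℝ) / ((![q1, q2, q3] i : ℕ) : ℝ)) (β i)) :
    p = 7 ∧ q1 = 4 ∧ q2 = 2 ∧ q3 = 1 := by
  have : NeZero p := ⟨hp.ne'⟩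
  have hq : ∀ i, 0 < ![q1, q2, q3] i := by
    simpa [Fin.forall_fin_succ] using ⟨by omega, by omega, h3⟩
  have hpq : ∀ i, p.Coprime (![q1, q2, q3] i) := by
    simp [Fin.forall_fin_succ, Nat.Coprime, hg1, hg2, hg3]
  have hinj : Function.Injective ![q1, q2, q3] :=
    StrictAnti.injective (by simp [h12, h23])
  obtain ⟨a, partition⟩ := exists_isProgressionPartition hq hpq hcov
  have sum_eq : q1 + q2 + q3 = p := by
    simpa [Fin.sum_univ_three] using partition.sum_length_eq_card
  have balanced := isBalancedTriple_of_isProgressionPartition hq hpq hinj partition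
  have dvd_seven : p ∣ 7 := dvd_of_nsmul_neg_inv_eq_zero (hpq 0) balanced.seven_nsmul_eq_zero
  rcases (Nat.dvd_prime (by norm_num)).mp dvd_seven with rfl | rfl <;> omega
end

section
/- Let p be a positive integer, d a residue with gcd(p, d) = 1, a any residue, and q a positive integer with q < p, and consider the TG-sequence with points {(a + id) mod p : i = 0, …, q−1}. Then the number of distinct gap sizes of this TG-sequence is at most 3, and if it equals 3 then the largest gap size equals the sum of the other two gap sizes. -/
/-- For a set `B` of residues in `{0, …, p−1}` and a point `x`, the size of the
(cyclic) gap from `x` to the next point of `B` modulo `p`: the least `t > 0`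
with `(x + t) mod p ∈ B`.  For `x ∈ B` this recovers the differences
`a_{i+1} − a_i` of the sorted points, together with the wrap-around gap
`p + a_1 − a_q`. -/
noncomputable def gapAt (p : ℕ) (B : Finset ℕ) (x : ℕ) : ℕ :=
  sInf {t : ℕ | 0 < t ∧ (x + t) % p ∈ B}

/-- The set of gap sizes of `B` as a subset of residues modulo `p`. -/
noncomputable def gapSizes (p : ℕ) (B : Finset ℕ) : Finset ℕ :=
  B.image (gapAt p B)

/-!
The points `(k, t)` with `t ≡ k d (mod p)` form a lattice in `ℤ × ℤ`, and the gap following the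
point of index `i` is the least `t > 0` of a lattice point with `-i ≤ k < q - i`. Let `(u, α)` be
the lowest lattice point above the axis with `0 ≤ k < q`, and `(-v, β)` the lowest with
`-q < k ≤ 0`, ties being broken by the smallest `|k|`. Subtracting `(u, α)` from a lattice point
with `0 ≤ k < u` shows that its height is at least `α + β`, and symmetrically for `-v < k ≤ 0`.
So if the window `[-i, q - i)` contains `u` or `-v`, the gap is `α` or `β`. If it contains
neither, then it contains `u - v`, and the gap is `α + β`.
-/

open Set

section Lattice

variable {K G : Type*} [AddCommGroup K] [AddCommGroup G]

/-- The mirror image of a subgroup under `(k, t) ↦ (-k, t)`, which exchanges forward and backward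
index shifts. -/
def reflectShift (L : AddSubgroup (K × G)) : AddSubgroup (K × G) :=
  L.comap ((-AddMonoidHom.id K).prodMap (AddMonoidHom.id G))

theorem mem_reflectShift {L : AddSubgroup (K × G)} {k : K} {t : G} :
    (k, t) ∈ reflectShift L ↔ (-k, t) ∈ L :=
  Iff.rfl

theorem reflectShift_reflectShift (L : AddSubgroup (K × G)) :
    reflectShift (reflectShift L) = L := by
  ext ⟨k, t⟩
  rw [mem_reflectShift, mem_reflectShift, neg_neg]

variable [LinearOrder K] [LinearOrder G]

/-- The positive displacements `t` realised in the subgroup `L` by an index shift in the window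
`W`. The gaps of a TG-sequence are least elements of such sets. -/
def displacements (L : AddSubgroup (K × G)) (W : Set K) : Set G :=
  {t | 0 < t ∧ ∃ k ∈ W, (k, t) ∈ L}

/-- The element `(u, α)` is the smallest forward step of `L` within range `q`: `α` is the
least positive displacement by an index shift in `[0, q)`, and `u` the least nonnegative shift
realising it. Smallest backward steps are smallest forward steps of `reflectShift L`. -/
structure IsSmallestStep (L : AddSubgroup (K × G)) (q u : K) (α : G) : Prop where
  isLeast_displacement : IsLeast (displacements L (Ico 0 q)) α
  isLeast_shift : IsLeast {k | 0 ≤ k ∧ (k, α) ∈ L} u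

theorem exists_isSmallestStep [PredOrder K] [IsPredArchimedean K] [PredOrder G]
    [IsPredArchimedean G] {L : AddSubgroup (K × G)} {q : K}
    (hL : (displacements L (Ico 0 q)).Nonempty) :
    ∃ u α, IsSmallestStep L q u α := by
  have displacements_bddBelow : BddBelow (displacements L (Ico 0 q)) :=
    ⟨0, fun _ ht => ht.1.le⟩
  obtain ⟨α, hα⟩ := displacements_bddBelow.exists_isLeast_of_nonempty hL
  obtain ⟨_, k, hk, hkα⟩ := hα.1
  have shifts_bddBelow : BddBelow {k | 0 ≤ k ∧ (k, α) ∈ L} := ⟨0, fun _ hk => hk.1⟩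
  obtain ⟨u, hu⟩ := shifts_bddBelow.exists_isLeast_of_nonempty ⟨k, hk.1, hkα⟩
  exact ⟨u, α, hα, hu⟩

namespace IsSmallestStep

variable {L : AddSubgroup (K × G)} {q u v i k : K} {α β t : G}

theorem mem (hα : IsSmallestStep L q u α) : (u, α) ∈ L :=
  hα.isLeast_shift.1.2

theorem shift_nonneg (hα : IsSmallestStep L q u α) : 0 ≤ u :=
  hα.isLeast_shift.1.1

theorem shift_lt (hα : IsSmallestStep L q u α) : u < q := by
  obtain ⟨_, k, ⟨hk₀, hkq⟩, hkα⟩ := hα.isLeast_displacement.1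
  exact (hα.isLeast_shift.2 ⟨hk₀, hkα⟩).trans_lt hkq

theorem pos (hα : IsSmallestStep L q u α) : 0 < α :=
  hα.isLeast_displacement.1.1

theorem le (hα : IsSmallestStep L q u α) (ht : 0 < t) (hk₀ : 0 ≤ k) (hkq : k < q)
    (hkt : (k, t) ∈ L) : α ≤ t :=
  hα.isLeast_displacement.2 ⟨ht, k, ⟨hk₀, hkq⟩, hkt⟩

variable [IsOrderedAddMonoid K]

theorem mem_displacements_of_shift_lt (hα : IsSmallestStep L q u α) (hi₀ : 0 ≤ i)
    (hu : u < q - i) : α ∈ displacements L (Ico (-i) (q - i)) :=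
  ⟨hα.pos, u, ⟨(neg_nonpos.2 hi₀).trans hα.shift_nonneg, hu⟩, hα.mem⟩

theorem mem_displacements_of_shift_le (hβ : IsSmallestStep (reflectShift L) q v β) (hiq : i < q)
    (hv : v ≤ i) : β ∈ displacements L (Ico (-i) (q - i)) :=
  ⟨hβ.pos, -v, ⟨neg_le_neg hv, (neg_nonpos.2 hβ.shift_nonneg).trans_lt (sub_pos.2 hiq)⟩, hβ.mem⟩

variable [IsOrderedAddMonoid G]

theorem add_le_of_lt_shift (hα : IsSmallestStep L q u α)
    (hβ : IsSmallestStep (reflectShift L) q v β) (ht : 0 < t) (hk₀ : 0 ≤ k) (hku : k < u)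
    (hkt : (k, t) ∈ L) : α + β ≤ t := by
  have hαt : α ≤ t := hα.le ht hk₀ (hku.trans hα.shift_lt) hkt
  have hne : α ≠ t := fun h => hku.not_ge (hα.isLeast_shift.2 ⟨hk₀, h ▸ hkt⟩)
  have hmem : (u - k, t - α) ∈ reflectShift L := by
    rw [mem_reflectShift, neg_sub]
    exact sub_mem hkt hα.mem
  have hβt : β ≤ t - α :=
    hβ.le (sub_pos.2 (hαt.lt_of_ne hne)) (sub_nonneg.2 hku.le)
      ((sub_le_self u hk₀).trans_lt hα.shift_lt) hmem
  exact le_sub_iff_add_le'.1 hβt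

theorem le_or_le_or_add_le_of_mem_displacements (hα : IsSmallestStep L q u α)
    (hβ : IsSmallestStep (reflectShift L) q v β) (hi₀ : 0 ≤ i) (hiq : i < q)
    (ht : t ∈ displacements L (Ico (-i) (q - i))) :
    (u < q - i ∧ α ≤ t) ∨ (v ≤ i ∧ β ≤ t) ∨ α + β ≤ t := by
  obtain ⟨ht₀, k, ⟨hik, hkq⟩, hkt⟩ := ht
  rcases le_total 0 k with hk | hk
  · rcases lt_or_ge k u with hku | huk
    · exact .inr (.inr (hα.add_le_of_lt_shift hβ ht₀ hk hku hkt))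
    · have hkq' : k < q := hkq.trans_le (sub_le_self q hi₀)
      exact .inl ⟨huk.trans_lt hkq, hα.le ht₀ hk hkq' hkt⟩
  · have hk₀ : 0 ≤ -k := neg_nonneg.2 hk
    have hki : -k ≤ i := neg_le.1 hik
    have hkt' : (-k, t) ∈ reflectShift L := by rwa [mem_reflectShift, neg_neg]
    rcases lt_or_ge (-k) v with hkv | hvk
    · have hα' : IsSmallestStep (reflectShift (reflectShift L)) q u α := by
        rwa [reflectShift_reflectShift]
      exact .inr (.inr (add_comm α β ▸ hβ.add_le_of_lt_shift hα' ht₀ hk₀ hkv hkt'))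
    · exact .inr (.inl ⟨hvk.trans hki, hβ.le ht₀ hk₀ (hki.trans_lt hiq) hkt'⟩)

theorem add_mem_displacements (hα : IsSmallestStep L q u α)
    (hβ : IsSmallestStep (reflectShift L) q v β) (hu : q - i ≤ u) (hv : i < v) :
    α + β ∈ displacements L (Ico (-i) (q - i)) := by
  have hαβ : (u - v, α + β) ∈ L := by
    rw [sub_eq_add_neg]
    exact add_mem hα.mem hβ.mem
  have huq := hα.shift_lt
  have hvq := hβ.shift_lt
  have hwindow : u - v ∈ Ico (-i) (q - i) := ⟨by grind, by grind⟩
  exact ⟨add_pos hα.pos hβ.pos, u - v, hwindow, hαβ⟩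

theorem isLeast_or_isLeast_or_isLeast_add (hα : IsSmallestStep L q u α)
    (hβ : IsSmallestStep (reflectShift L) q v β) (hi₀ : 0 ≤ i) (hiq : i < q) :
    IsLeast (displacements L (Ico (-i) (q - i))) α ∨
      IsLeast (displacements L (Ico (-i) (q - i))) β ∨
        IsLeast (displacements L (Ico (-i) (q - i))) (α + β) := by
  have bound {t : G} (ht : t ∈ displacements L (Ico (-i) (q - i))) :=
    hα.le_or_le_or_add_le_of_mem_displacements hβ hi₀ hiq ht
  have hα_le : α ≤ α + β := le_add_of_nonneg_right hβ.pos.le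
  have hβ_le : β ≤ α + β := le_add_of_nonneg_left hα.pos.le
  by_cases hu : u < q - i <;> by_cases hv : v ≤ i
  · rcases le_total α β with hαβ | hβα
    · exact .inl ⟨hα.mem_displacements_of_shift_lt hi₀ hu, fun t ht => by grind⟩
    · exact .inr (.inl ⟨hβ.mem_displacements_of_shift_le hiq hv, fun t ht => by grind⟩)
  · exact .inl ⟨hα.mem_displacements_of_shift_lt hi₀ hu, fun t ht => by grind⟩
  · exact .inr (.inl ⟨hβ.mem_displacements_of_shift_le hiq hv, fun t ht => by grind⟩)
  · exact .inr (.inr ⟨hα.add_mem_displacements hβ (not_lt.1 hu) (not_le.1 hv),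
      fun t ht => by grind⟩)

end IsSmallestStep

end Lattice

/-- The lattice of pairs of an index shift `k` and a displacement `t` such that moving `k` terms
along a progression with difference `d` moves the point by `t` modulo `p`. -/
def shiftLattice (p d : ℤ) : AddSubgroup (ℤ × ℤ) :=
  (AddSubgroup.zmultiples p).comap
    (AddMonoidHom.snd ℤ ℤ - (AddMonoidHom.mulRight d).comp (AddMonoidHom.fst ℤ ℤ))

theorem mem_shiftLattice {p d k t : ℤ} : (k, t) ∈ shiftLattice p d ↔ p ∣ t - k * d :=
  Int.mem_zmultiples_iff

theorem reflectShift_shiftLattice (p d : ℤ) :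
    reflectShift (shiftLattice p d) = shiftLattice p (-d) := by
  ext ⟨k, t⟩
  rw [mem_reflectShift, mem_shiftLattice, mem_shiftLattice, neg_mul_comm]

theorem exists_isSmallestStep_shiftLattice {p q : ℤ} (d : ℤ) (hp : 0 < p) (hq : 0 < q) :
    ∃ u α, IsSmallestStep (shiftLattice p d) q u α :=
  exists_isSmallestStep ⟨p, hp, 0, ⟨le_rfl, hq⟩, mem_shiftLattice.2 (by simp)⟩

/-- The set of points of the TG-sequence of length `q` with start `a` and difference `d`
modulo `p`. -/
def tgPoints (p d a q : ℕ) : Finset ℕ :=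
  (Finset.range q).image fun i => (a + i * d) % p

theorem add_mod_mem_tgPoints_iff {p d a q i t : ℕ} :
    ((a + i * d) % p + t) % p ∈ tgPoints p d a q ↔
      ∃ k ∈ Ico (-i : ℤ) (q - i), (k, (t : ℤ)) ∈ shiftLattice p d := by
  have index_iff (j : ℕ) :
      (a + j * d) % p = ((a + i * d) % p + t) % p ↔
        ((j - i : ℤ), (t : ℤ)) ∈ shiftLattice p d := by
    rw [Nat.mod_add_mod, mem_shiftLattice]
    refine Nat.modEq_iff_dvd.trans (iff_of_eq (congrArg _ ?_))
    push_cast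
    ring
  simp only [tgPoints, Finset.mem_image, Finset.mem_range, index_iff]
  constructor
  · rintro ⟨j, hj, hmem⟩
    exact ⟨j - i, by constructor <;> omega, hmem⟩
  · rintro ⟨k, ⟨hik, hkq⟩, hmem⟩
    obtain ⟨j, hj⟩ : ∃ j : ℕ, (j : ℤ) = k + i := ⟨(k + i).toNat, by omega⟩
    exact ⟨j, by omega, by rwa [hj, add_sub_cancel_right]⟩

theorem gapAt_tgPoints_eq {p d a q i g : ℕ}
    (hg : IsLeast (displacements (shiftLattice p d) (Ico (-i : ℤ) (q - i))) (g : ℤ)) :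
    gapAt p (tgPoints p d a q) ((a + i * d) % p) = g := by
  have hmem (t : ℕ) : 0 < t ∧ ((a + i * d) % p + t) % p ∈ tgPoints p d a q ↔
      (t : ℤ) ∈ displacements (shiftLattice p d) (Ico (-i : ℤ) (q - i)) := by
    rw [add_mod_mem_tgPoints_iff, displacements, mem_ofPred_eq, Int.natCast_pos]
  have hleast : IsLeast {t : ℕ | 0 < t ∧ ((a + i * d) % p + t) % p ∈ tgPoints p d a q} g :=
    ⟨(hmem g).2 hg.1, fun t ht => Int.ofNat_le.1 (hg.2 ((hmem t).1 ht))⟩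
  exact hleast.csInf_eq

theorem exists_gapSizes_tgPoints_subset {p d a q : ℕ} (hp : 0 < p) (hq : 0 < q) :
    ∃ α β : ℕ, 0 < α ∧ 0 < β ∧ gapSizes p (tgPoints p d a q) ⊆ {α, β, α + β} := by
  have hp' : (0 : ℤ) < p := Int.natCast_pos.2 hp
  have hq' : (0 : ℤ) < q := Int.natCast_pos.2 hq
  obtain ⟨u, α, hα⟩ := exists_isSmallestStep_shiftLattice d hp' hq'
  obtain ⟨v, β, hβ⟩ := exists_isSmallestStep_shiftLattice (-d) hp' hq'
  rw [← reflectShift_shiftLattice] at hβ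
  lift α to ℕ using hα.pos.le
  lift β to ℕ using hβ.pos.le
  refine ⟨α, β, Int.natCast_pos.1 hα.pos, Int.natCast_pos.1 hβ.pos, ?_⟩
  intro g hg
  obtain ⟨x, hx, rfl⟩ := Finset.mem_image.1 hg
  obtain ⟨i, hi, rfl⟩ := Finset.mem_image.1 hx
  have hiq : (i : ℤ) < q := Int.ofNat_lt.2 (Finset.mem_range.1 hi)
  rw [Finset.mem_insert, Finset.mem_insert, Finset.mem_singleton]
  rcases hα.isLeast_or_isLeast_or_isLeast_add hβ (Int.natCast_nonneg i) hiq with h | h | h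
  · exact .inl (gapAt_tgPoints_eq h)
  · exact .inr (.inl (gapAt_tgPoints_eq h))
  · exact .inr (.inr (gapAt_tgPoints_eq (mod_cast h)))

theorem exists_lt_lt_eq_add_of_subset_of_card_eq_three {M : Type*} [AddCommMonoid M] [LinearOrder M]
    [IsOrderedCancelAddMonoid M] {S : Finset M} {α β : M} (hα : 0 < α) (hβ : 0 < β)
    (hS : S ⊆ {α, β, α + β}) (hcard : S.card = 3) :
    ∃ g1 g2 g3, g1 < g2 ∧ g2 < g3 ∧ S = {g1, g2, g3} ∧ g3 = g1 + g2 := by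
  have hS_eq : S = {α, β, α + β} :=
    Finset.eq_of_subset_of_card_le hS (hcard ▸ Finset.card_le_three)
  have hne : α ≠ β := by
    rintro rfl
    have hle : ({α, α, α + α} : Finset M).card ≤ 2 := by
      rw [Finset.insert_idem]
      exact Finset.card_le_two
    rw [← hS_eq, hcard] at hle
    omega
  rcases hne.lt_or_gt with hαβ | hβα
  · exact ⟨α, β, α + β, hαβ, lt_add_of_pos_left β hα, hS_eq, rfl⟩
  · exact ⟨β, α, α + β, hβα, lt_add_of_pos_right α hβ, by rw [hS_eq, Finset.insert_comm],
      add_comm α β⟩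

theorem three_gap_general (p d a q : ℕ) (hp : 0 < p) (hq : 0 < q) :
    (gapSizes p (tgPoints p d a q)).card ≤ 3 ∧
    ((gapSizes p (tgPoints p d a q)).card = 3 →
      ∃ g1 g2 g3, g1 < g2 ∧ g2 < g3 ∧ gapSizes p (tgPoints p d a q) = {g1, g2, g3} ∧
        g3 = g1 + g2) := by
  obtain ⟨α, β, hα, hβ, hsub⟩ := exists_gapSizes_tgPoints_subset (d := d) (a := a) hp hq
  exact ⟨(Finset.card_le_card hsub).trans Finset.card_le_three,
    exists_lt_lt_eq_add_of_subset_of_card_eq_three hα hβ hsub⟩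

/-- The Three Gap Theorem: a TG-sequence `{(a + i d) mod p : 0 ≤ i < q}` with
`gcd(p, d) = 1` and `0 < q < p` has at most `3` distinct gap sizes, and if it
has exactly `3` then the largest gap size is the sum of the other two. -/
theorem three_gap (p d a q : ℕ) (hp : 0 < p) (hd : Nat.gcd p d = 1)
    (hq : 0 < q) (hqp : q < p)
    (B : Finset ℕ) (hB : B = (Finset.range q).image (fun i => (a + i * d) % p)) :
    (gapSizes p B).card ≤ 3 ∧
    ((gapSizes p B).card = 3 →
      ∃ g1 g2 g3, g1 < g2 ∧ g2 < g3 ∧ gapSizes p B = {g1, g2, g3} ∧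
        g3 = g1 + g2) := by
  subst hB
  exact three_gap_general p d a q hp hq
end
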